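/- Assume that P is locally compact and that X has the Vitali–Carathéodory property. If E ⊆ P satisfies C_X(E) = 0, then for every ε > 0 there exists an open set U ⊇ E with C_X(U) < ε. -/

import Mathlib

/-!
The idea is to use the cost of leaving an open set as a capacity test function.

If `C_X(E) = 0`, then summing test functions and upper gradients with rapidly decreasing norms
yields a density `ρ₀` of small norm which is infinite on `E` and whose integral is infinite along
every curve starting in `E` (`QBFL.exists_density_of_cap_eq_zero`). By the Vitali–Carathéodory
property, `ρ₀` has a lower semicontinuous majorant `ρ` of small norm.

Suppose first that `E` lies in the interior of a compact set `K`, and put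
`V = {1 < ρ} ∩ interior K`, an open set containing `E`. Let `u x` be the infimum of `∫_γ ρ ds` over
the curves `γ` from `x` to the complement of `V` (`exitCost`). Then `u = 0` off `V` and `u = ∞` on
`E`, and `ρ` is an upper gradient of `min u 1`, which is bounded by `ρ`. Moreover `u` is lower
semicontinuous (`lowerSemicontinuous_exitCost`): since `1 ≤ ρ` on `V`, curves in `V` of bounded
cost have bounded length, so Arzelà–Ascoli and Fatou's lemma apply. Hence `{1 < u}` is an open
neighbourhood of `E` of small capacity (`QBFL.exists_local`).

In general, positivity of the measure of balls and σ-finiteness make `P` separable, hence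
exhausted by compact sets `K n`. The local test functions for `E ∩ interior (K n)`, with norms
chosen small depending on `n`, are combined by taking their supremum; the sum of their upper
gradients is an upper gradient of it, and the Riesz–Fischer property bounds both norms.
-/

open MeasureTheory Filter Set Topology Metric ENNReal

noncomputable section

/-- A (non-constant, rectifiable) curve in `P`, parametrized by arc length. -/
structure Curve (P : Type*) [PseudoMetricSpace P] where
  len : ℝ
  len_pos : 0 < len
  toFun : ℝ → P
  lip : LipschitzOnWith 1 toFun (Set.Icc 0 len)

variable {P : Type*}

/-- The curve integral `∫_γ ρ ds`. -/
def curveLint [PseudoMetricSpace P] (γ : Curve P) (ρ : P → ℝ≥0∞) : ℝ≥0∞ :=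
  ∫⁻ t in Set.Icc (0 : ℝ) γ.len, ρ (γ.toFun t)

/-- `g` is an upper gradient of `u`. -/
def IsUpperGradient [PseudoMetricSpace P] [MeasurableSpace P]
    (u : P → EReal) (g : P → ℝ≥0∞) : Prop :=
  Measurable g ∧
    ∀ γ : Curve P, (u (γ.toFun 0) - u (γ.toFun γ.len)).abs ≤ curveLint γ g

/-- A quasi-Banach function lattice over `(P, μ)` with continuous quasi-norm. -/
structure QBFL (P : Type*) [MeasurableSpace P] (μ : MeasureTheory.Measure P) where
  nrm : (P → EReal) → ℝ≥0∞
  cc : ℝ≥0∞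
  one_le_cc : 1 ≤ cc
  cc_lt_top : cc < ⊤
  nrm_eq_zero_iff : ∀ u : P → EReal, Measurable u → (nrm u = 0 ↔ u =ᵐ[μ] 0)
  nrm_smul : ∀ (a : ℝ) (u : P → EReal),
    nrm (fun x => (a : EReal) * u x) = ENNReal.ofReal |a| * nrm u
  nrm_triangle : ∀ u v : P → EReal,
    nrm (fun x => u x + v x) ≤ cc * (nrm u + nrm v)
  nrm_mono : ∀ u v : P → EReal, (∀ᵐ x ∂μ, (u x).abs ≤ (v x).abs) → nrm u ≤ nrm v
  nrm_rieszFischer : ∀ f : ℕ → P → EReal, (∀ n, ∀ᵐ x ∂μ, 0 ≤ f n x) →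
    nrm (fun x => ∑' n, f n x) ≤ ∑' n, cc ^ (n + 1) * nrm (f n)
  nrm_continuous : ∀ (f : ℕ → P → EReal) (u : P → EReal),
    Tendsto (fun n => nrm fun x => f n x - u x) atTop (𝓝 0) →
    Tendsto (fun n => nrm (f n)) atTop (𝓝 (nrm u))

variable [MetricSpace P] [MeasurableSpace P] {μ : MeasureTheory.Measure P}

/-- The quasi-norm applied to a `ℝ≥0∞`-valued function. -/
def QBFL.nrmE (X : QBFL P μ) (g : P → ℝ≥0∞) : ℝ≥0∞ :=
  X.nrm fun x => (g x : EReal)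

/-- The Newtonian quasi-seminorm `‖u‖_{N¹X}`. -/
def QBFL.newt (X : QBFL P μ) (u : P → EReal) : ℝ≥0∞ :=
  X.nrm u + ⨅ g ∈ {g : P → ℝ≥0∞ | IsUpperGradient u g}, X.nrmE g

/-- Membership in the Newtonian space `N¹X`. -/
def QBFL.memN1 (X : QBFL P μ) (u : P → EReal) : Prop :=
  Measurable u ∧ X.newt u < ⊤

/-- The Sobolev capacity `C_X`. -/
def QBFL.cap (X : QBFL P μ) (E : Set P) : ℝ≥0∞ :=
  ⨅ u ∈ {u : P → EReal | X.memN1 u ∧ ∀ x ∈ E, 1 ≤ u x}, X.newt u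


/-- `X` has the Vitali–Carathéodory property: the quasi-norm of every measurable function
is the infimum of the quasi-norms of its lower semicontinuous majorants. -/
def QBFL.VCProp [TopologicalSpace P] (X : QBFL P μ) : Prop :=
  ∀ u : P → EReal, Measurable u →
    X.nrm u =
      ⨅ v ∈ {v : P → EReal | (∀ x, ((u x).abs : EReal) ≤ v x) ∧ LowerSemicontinuous v},
        X.nrm v

set_option linter.unusedSectionVars false

/-! ### The quasi-norm on `[0, ∞]`-valued functions -/

theorem ereal_abs_coe_ennreal (a : ℝ≥0∞) : ((a : EReal)).abs = a := by
  induction a with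
  | top => rfl
  | coe r =>
    change ((r : ℝ) : EReal).abs = _
    rw [EReal.abs_def, abs_of_nonneg r.coe_nonneg]
    simp

theorem ereal_coe_tsum (f : ℕ → ℝ≥0∞) :
    ((∑' n, f n : ℝ≥0∞) : EReal) = ∑' n, (f n : EReal) := by
  have h := (ENNReal.summable (f := f)).hasSum.map
    (⟨⟨fun a => (a : EReal), rfl⟩, EReal.coe_ennreal_add⟩ : ℝ≥0∞ →+ EReal)
    continuous_coe_ennreal_ereal
  exact h.tsum_eq.symm

theorem ereal_le_abs (x : EReal) : x ≤ (x.abs : EReal) := by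
  induction x with
  | bot => simp
  | top => simp
  | coe r => rw [EReal.coe_abs]; exact_mod_cast le_abs_self r

theorem ereal_toENNReal_le_abs (x : EReal) : x.toENNReal ≤ x.abs := by
  rcases le_total 0 x with h | h
  · rw [← EReal.coe_ennreal_le_coe_ennreal_iff, EReal.coe_toENNReal h]
    exact ereal_le_abs x
  · simp [EReal.toENNReal_of_nonpos h]

theorem QBFL.nrmE_mono (X : QBFL P μ) {f g : P → ℝ≥0∞} (h : ∀ x, f x ≤ g x) :
    X.nrmE f ≤ X.nrmE g :=
  X.nrm_mono _ _ (Eventually.of_forall fun x => by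
    simpa only [ereal_abs_coe_ennreal] using h x)

theorem QBFL.nrmE_add (X : QBFL P μ) (f g : P → ℝ≥0∞) :
    X.nrmE (fun x => f x + g x) ≤ X.cc * (X.nrmE f + X.nrmE g) := by
  simpa only [QBFL.nrmE, EReal.coe_ennreal_add] using
    X.nrm_triangle (fun x => (f x : EReal)) (fun x => (g x : EReal))

theorem QBFL.nrmE_tsum (X : QBFL P μ) (f : ℕ → P → ℝ≥0∞) :
    X.nrmE (fun x => ∑' n, f n x) ≤ ∑' n, X.cc ^ (n + 1) * X.nrmE (f n) := by
  simpa only [QBFL.nrmE, ereal_coe_tsum] using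
    X.nrm_rieszFischer (fun n x => (f n x : EReal))
      (fun n => Eventually.of_forall fun x => EReal.coe_ennreal_nonneg _)

/-- The Vitali–Carathéodory property in terms of `[0, ∞]`-valued functions. -/
theorem QBFL.exists_lsc_majorant (X : QBFL P μ) (hVC : X.VCProp) {f : P → ℝ≥0∞}
    (hf : Measurable f) {δ : ℝ≥0∞} (hδ : X.nrmE f < δ) :
    ∃ h : P → ℝ≥0∞, LowerSemicontinuous h ∧ (∀ x, f x ≤ h x) ∧ X.nrmE h < δ := by
  have h1 := hVC (fun x => (f x : EReal)) hf.coe_ereal_ennreal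
  rw [QBFL.nrmE, h1] at hδ
  simp only [iInf_lt_iff, mem_ofPred_eq, exists_prop, ereal_abs_coe_ennreal] at hδ
  obtain ⟨v, ⟨hv, hlsc⟩, hlt⟩ := hδ
  have hcoe : ∀ x, ((v x).toENNReal : EReal) = v x := fun x =>
    EReal.coe_toENNReal ((EReal.coe_ennreal_nonneg _).trans (hv x))
  refine ⟨fun x => (v x).toENNReal, fun x y hy => ?_, fun x => ?_, ?_⟩
  · have : (y : EReal) < v x := by
      rw [← hcoe x]; exact EReal.coe_ennreal_lt_coe_ennreal_iff.2 hy
    filter_upwards [hlsc x _ this] with z hz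
    rw [← hcoe z] at hz
    exact EReal.coe_ennreal_lt_coe_ennreal_iff.1 hz
  · rw [← EReal.coe_ennreal_le_coe_ennreal_iff, hcoe]; exact hv x
  · simpa only [QBFL.nrmE, hcoe] using hlt

/-- The pair consists of the positive part `a` of a capacity test function and an upper gradient
`g` of that function. -/
theorem QBFL.exists_of_cap_lt (X : QBFL P μ) {E : Set P} {δ : ℝ≥0∞} (h : X.cap E < δ) :
    ∃ a g : P → ℝ≥0∞, Measurable a ∧ Measurable g ∧ X.nrmE a < δ ∧ X.nrmE g < δ ∧
      (∀ x ∈ E, 1 ≤ a x) ∧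
      ∀ γ : Curve P, γ.toFun 0 ∈ E → 1 ≤ a (γ.toFun γ.len) + curveLint γ g := by
  simp only [QBFL.cap, iInf_lt_iff, mem_ofPred_eq, exists_prop] at h
  obtain ⟨u, ⟨⟨hum, -⟩, hu1⟩, hlt⟩ := h
  have hu := lt_of_le_of_lt (le_self_add) hlt
  have hg := lt_of_le_of_lt (le_add_self) hlt
  simp only [iInf_lt_iff, mem_ofPred_eq, exists_prop] at hg
  obtain ⟨g, ⟨hgm, hgu⟩, hglt⟩ := hg
  refine ⟨fun x => (u x).toENNReal, g, hum.ereal_toENNReal, hgm, lt_of_le_of_lt ?_ hu, hglt,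
    fun x hx => ?_, fun γ hγ => ?_⟩
  · refine X.nrm_mono _ _ (Eventually.of_forall fun x => ?_)
    rw [ereal_abs_coe_ennreal]
    exact ereal_toENNReal_le_abs _
  · have := EReal.toENNReal_le_toENNReal (hu1 x hx)
    rwa [← EReal.coe_ennreal_one, EReal.toENNReal_coe] at this
  · change 1 ≤ (u (γ.toFun γ.len)).toENNReal + _
    have h1 := hu1 _ hγ
    have h2 := hgu γ
    have h3 := (ereal_le_abs _).trans (EReal.coe_ennreal_le_coe_ennreal_iff.2 h2)
    have h4 : u (γ.toFun γ.len) ≤ ((u (γ.toFun γ.len)).toENNReal : EReal) :=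
      EReal.coe_toENNReal_eq_max.ge.trans' (le_max_right _ _)
    generalize u (γ.toFun 0) = p at *
    generalize u (γ.toFun γ.len) = q at *
    generalize curveLint γ g = c at *
    rcases eq_or_ne q ⊤ with rfl | hq
    · simp
    rcases eq_or_ne c ⊤ with rfl | hc
    · simp
    have h5 : p ≤ c + q := by
      rw [EReal.sub_le_iff_le_add (Or.inr ?_) (Or.inl hq)] at h3
      · exact h3
      · simpa using hc
    rw [← EReal.coe_ennreal_le_coe_ennreal_iff, EReal.coe_ennreal_add, EReal.coe_ennreal_one,
      add_comm]
    exact h1.trans (h5.trans (by gcongr))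

/-! ### The cost of leaving an open set -/

/-- The infimum of `∫ ρ ∘ f` over `[0, l]`, taken over all `1`-Lipschitz maps `f` that start at `x`
and leave `V` for the first time at time `l`. The value `l = 0` is allowed, so that the cost
vanishes off `V`; the maps are defined on all of `ℝ`, which loses nothing since a curve can be
extended by constants. -/
def exitCost (ρ : P → ℝ≥0∞) (V : Set P) (x : P) : ℝ≥0∞ :=
  ⨅ (l : ℝ) (f : ℝ → P)
    (_ : 0 ≤ l ∧ LipschitzWith 1 f ∧ f 0 = x ∧ f l ∉ V ∧ ∀ t ∈ Ico 0 l, f t ∈ V),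
    ∫⁻ t in Icc 0 l, ρ (f t)

/-- Stopping at the first exit time shows that maps which may leave `V` before time `l` are
also competitors. -/
theorem exitCost_le {ρ : P → ℝ≥0∞} {V : Set P} (hV : IsOpen V) {f : ℝ → P}
    (hf : LipschitzWith 1 f) {l : ℝ} (hl : 0 ≤ l) (hfl : f l ∉ V) :
    exitCost ρ V (f 0) ≤ ∫⁻ t in Icc 0 l, ρ (f t) := by
  have hS : IsCompact (Icc 0 l ∩ f ⁻¹' Vᶜ) :=
    isCompact_Icc.inter_right (hV.isClosed_compl.preimage hf.continuous)
  obtain ⟨τ, ⟨hτ, hτV⟩, hmin⟩ := hS.exists_isLeast ⟨l, ⟨hl, le_rfl⟩, hfl⟩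
  refine (iInf₂_le_of_le τ f (iInf_le_of_le ⟨hτ.1, hf, rfl, hτV, fun t ht => ?_⟩ le_rfl)).trans
    (lintegral_mono_set (Icc_subset_Icc_right hτ.2))
  by_contra hcon
  exact absurd (hmin ⟨⟨ht.1, ht.2.le.trans hτ.2⟩, hcon⟩) (not_le.2 ht.2)

theorem exitCost_eq_zero {ρ : P → ℝ≥0∞} {V : Set P} (hV : IsOpen V) {x : P} (hx : x ∉ V) :
    exitCost ρ V x = 0 := by
  have h := exitCost_le (ρ := ρ) hV (LipschitzWith.const' (K := 1) (α := ℝ) x) le_rfl hx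
  simpa using h

/-- Extension by constants of a curve to a `1`-Lipschitz map on the line. -/
theorem Curve.exists_extension (γ : Curve P) :
    ∃ F : ℝ → P, LipschitzWith 1 F ∧ EqOn F γ.toFun (Icc 0 γ.len) := by
  refine ⟨IccExtend γ.len_pos.le ((Icc 0 γ.len).domRestrict γ.toFun), ?_, fun t ht => ?_⟩
  · have h := γ.lip.to_restrict.comp (LipschitzWith.projIcc γ.len_pos.le)
    rw [one_mul] at h
    exact h
  · rw [IccExtend_of_mem _ _ ht]; rfl

/-- Running along `γ` before leaving `V` costs at most `∫_γ ρ`. -/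
theorem exitCost_le_add (ρ : P → ℝ≥0∞) {V : Set P} (hV : IsOpen V) (γ : Curve P) :
    exitCost ρ V (γ.toFun 0) ≤ curveLint γ ρ + exitCost ρ V (γ.toFun γ.len) := by
  obtain ⟨F, hF, hFγ⟩ := γ.exists_extension
  have hlen := γ.len_pos
  rw [← hFγ ⟨le_rfl, hlen.le⟩, ← hFγ ⟨hlen.le, le_rfl⟩]
  have hint : curveLint γ ρ = ∫⁻ t in Icc 0 γ.len, ρ (F t) :=
    setLIntegral_congr_fun measurableSet_Icc fun t ht => by simp only [hFγ ht]
  rw [hint]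
  set L := γ.len
  simp only [exitCost, ENNReal.add_iInf]
  refine le_iInf₂ fun l f => le_iInf fun hcond => ?_
  change exitCost ρ V (F 0) ≤ _
  obtain ⟨hl, hf, hf0, hfl, -⟩ := hcond
  set h : ℝ → P := fun t => if t ≤ L then F t else f (t - L) with hh
  have hle : ∀ t, t ≤ L → h t = F t := fun t ht => if_pos ht
  have hge : ∀ t, L ≤ t → h t = f (t - L) := fun t ht => by
    rcases ht.eq_or_lt with rfl | ht
    · rw [hle _ le_rfl, sub_self, hf0]
    · exact if_neg (not_le.2 ht)
  have hLip : LipschitzWith 1 h := by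
    have hF' := fun s t => hF.dist_le_mul s t
    have hf' := fun s t => hf.dist_le_mul s t
    simp only [NNReal.coe_one, one_mul, Real.dist_eq] at hF' hf'
    have key : ∀ s t, s ≤ t → dist (h s) (h t) ≤ |s - t| := fun s t hst => by
      rcases le_total t L with h1 | h1
      · rw [hle s (hst.trans h1), hle t h1]; exact hF' s t
      rcases le_total L s with h2 | h2
      · rw [hge s h2, hge t h1]
        simpa using hf' (s - L) (t - L)
      · rw [hle s h2, hge t h1]
        have h3 := hF' s L
        have h4 := hf' 0 (t - L)
        rw [hf0] at h4
        rw [abs_of_nonpos (by linarith)] at h3 h4 ⊢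
        linarith [dist_triangle (F s) (F L) (f (t - L))]
    refine LipschitzWith.of_dist_le_mul fun s t => ?_
    rw [NNReal.coe_one, one_mul, Real.dist_eq]
    rcases le_total s t with hst | hst
    · exact key s t hst
    · rw [dist_comm, abs_sub_comm]; exact key t s hst
  have h1 := exitCost_le (ρ := ρ) hV hLip (l := L + l) (by linarith)
    (by rw [hge _ (by linarith)]; simpa using hfl)
  rw [hle 0 hlen.le] at h1
  refine h1.trans ?_
  rw [← Icc_union_Icc_eq_Icc hlen.le (by linarith : L ≤ L + l)]
  refine (lintegral_union_le _ _ _).trans (add_le_add (le_of_eq ?_) (le_of_eq ?_))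
  · exact setLIntegral_congr_fun measurableSet_Icc fun t ht => by simp only [hle t ht.2]
  · rw [setLIntegral_congr_fun (g := fun t => ρ (f (t - L))) measurableSet_Icc
      fun t ht => by simp only [hge t ht.1]]
    have := (measurePreserving_sub_right volume L).setLIntegral_comp_preimage_emb
      (measurableEmbedding_subRight L) (fun t => ρ (f t)) (Icc 0 l)
    rw [← this]
    congr 2
    ext t
    simp [add_comm]

/-- The curve traversed backwards. -/
def Curve.rev (γ : Curve P) : Curve P where
  len := γ.len
  len_pos := γ.len_pos
  toFun t := γ.toFun (γ.len - t)
  lip := by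
    intro s hs t ht
    refine (γ.lip (x := γ.len - s) ⟨by linarith [hs.2], by linarith [hs.1]⟩
      (y := γ.len - t) ⟨by linarith [ht.2], by linarith [ht.1]⟩).trans (le_of_eq ?_)
    rw [edist_sub_left]

theorem curveLint_rev (γ : Curve P) (ρ : P → ℝ≥0∞) : curveLint γ.rev ρ = curveLint γ ρ := by
  have := (Measure.measurePreserving_sub_left volume γ.len).setLIntegral_comp_preimage_emb
    (MeasurableEquiv.subLeft γ.len).measurableEmbedding (fun t => ρ (γ.toFun t)) (Icc 0 γ.len)
  rw [curveLint, curveLint, ← this]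
  change ∫⁻ t in Icc 0 γ.len, ρ (γ.toFun (γ.len - t)) = _
  congr 2
  ext t
  simp [and_comm]

/-- Arzelà–Ascoli for `1`-Lipschitz maps from `[0, L]` into a compact set. -/
theorem exists_subseq_tendsto_lipschitz {K : Set P} (hK : IsCompact K) {L : ℝ} (hL : 0 ≤ L)
    (f : ℕ → ℝ → P) (hf : ∀ n, LipschitzWith 1 (f n)) (hfK : ∀ n, ∀ t ∈ Icc 0 L, f n t ∈ K) :
    ∃ (F : ℝ → P) (φ : ℕ → ℕ), LipschitzWith 1 F ∧ StrictMono φ ∧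
      ∀ t ∈ Icc 0 L, Tendsto (fun n => f (φ n) t) atTop (𝓝 (F t)) := by
  let b : ℕ → BoundedContinuousFunction (Icc 0 L) P := fun n =>
    BoundedContinuousFunction.mkOfCompact
      ⟨fun t => f n t, (hf n).continuous.comp continuous_subtype_val⟩
  have hb : ∀ n t, b n t = f n t := fun n t => rfl
  have hcomp : IsCompact (closure (range b)) := by
    refine BoundedContinuousFunction.arzela_ascoli K hK (range b) ?_ ?_
    · rintro _ t ⟨n, rfl⟩
      exact hfK n t t.2
    · refine (LipschitzWith.uniformEquicontinuous _ 1 ?_).equicontinuous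
      rintro ⟨_, n, rfl⟩ s t
      exact hf n s t
  obtain ⟨g, -, φ, hφ, hg⟩ := hcomp.tendsto_subseq
    (x := b) fun n => subset_closure (mem_range_self n)
  have hpt : ∀ t : Icc 0 L, Tendsto (fun n => f (φ n) t) atTop (𝓝 (g t)) := fun t =>
    (BoundedContinuousFunction.tendsto_iff_tendstoUniformly.1 hg).tendsto_at t
  have hgL : LipschitzWith 1 g := fun s t =>
    le_of_tendsto ((hpt s).edist (hpt t)) (Eventually.of_forall fun n => hf (φ n) s t)
  refine ⟨IccExtend hL g, φ, ?_, hφ, fun t ht => ?_⟩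
  · have h := hgL.comp (LipschitzWith.projIcc hL)
    rw [one_mul] at h
    exact h
  · rw [IccExtend_of_mem _ _ ht]
    exact hpt ⟨t, ht⟩

/-- Maps of bounded cost out of the relatively compact set `V` have bounded domains because
`1 ≤ ρ` there, hence converge along a subsequence, and by Fatou's lemma the cost does not increase
in the limit. -/
theorem lowerSemicontinuous_exitCost [BorelSpace P] {ρ : P → ℝ≥0∞} (hρ : LowerSemicontinuous ρ)
    {V K : Set P} (hV : IsOpen V) (hK : IsCompact K) (hVK : V ⊆ K) (h1 : ∀ x ∈ V, 1 ≤ ρ x) :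
    LowerSemicontinuous (exitCost ρ V) := by
  intro x c hc
  by_contra hcon
  by_cases hxV : x ∉ V
  · rw [exitCost_eq_zero hV hxV] at hc
    exact ENNReal.not_lt_zero hc
  rw [not_not] at hxV
  have hfreq : ∃ᶠ y in 𝓝 x, exitCost ρ V y ≤ c ∧ y ∈ V := by
    rw [not_eventually] at hcon
    exact (hcon.mono fun y hy => not_lt.1 hy).and_eventually (hV.mem_nhds hxV)
  obtain ⟨y, hyx, hy⟩ := exists_seq_forall_of_frequently hfreq
  obtain ⟨c', hcc', hc'⟩ := exists_between hc
  have hc'top : c' ≠ ⊤ := hc'.ne_top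
  have hex : ∀ n, ∃ (l : ℝ) (f : ℝ → P), (0 ≤ l ∧ LipschitzWith 1 f ∧ f 0 = y n ∧ f l ∉ V ∧
      ∀ t ∈ Ico 0 l, f t ∈ V) ∧ ∫⁻ t in Icc 0 l, ρ (f t) < c' := fun n => by
    have := (hy n).1.trans_lt hcc'
    simpa only [exitCost, iInf_lt_iff, exists_prop] using this
  choose l f hf hfc using hex
  choose hl0 hLip hf0 hfl hfV using hf
  set L := c'.toReal with hLdef
  have hL : 0 ≤ L := ENNReal.toReal_nonneg
  have hlL : ∀ n, l n ≤ L := fun n => by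
    have h2 : ENNReal.ofReal (l n) ≤ ∫⁻ t in Icc 0 (l n), ρ (f n t) := by
      have h3 : ∫⁻ t in Ico 0 (l n), (1 : ℝ≥0∞) ≤ ∫⁻ t in Ico 0 (l n), ρ (f n t) :=
        setLIntegral_mono' measurableSet_Ico fun t ht => h1 _ (hfV n t ht)
      simp only [lintegral_const, Measure.restrict_apply_univ, Real.volume_Ico, one_mul,
        sub_zero] at h3
      exact h3.trans (lintegral_mono_set Ico_subset_Icc_self)
    exact (ENNReal.ofReal_le_iff_le_toReal hc'top).1 (h2.trans (hfc n).le)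
  have hlpos : ∀ n, 0 < l n := fun n => (hl0 n).lt_of_ne fun h => by
    apply hfl n
    rw [← h, hf0]
    exact (hy n).2
  have hfK : ∀ n, ∀ t ∈ Icc 0 (l n), f n t ∈ K := fun n t ht => by
    have h2 : MapsTo (f n) (closure (Ico 0 (l n))) K :=
      (show MapsTo (f n) (Ico 0 (l n)) K from fun t ht => hVK (hfV n t ht)).closure_left
        (hLip n).continuous hK.isClosed
    rw [closure_Ico (hlpos n).ne] at h2
    exact h2 ht
  -- Freezing `f n` at time `l n` keeps it in `K` on all of `[0, L]`.
  have hmin : ∀ n, LipschitzWith 1 fun t => f n (min t (l n)) := fun n => by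
    have h2 := (hLip n).comp (LipschitzWith.id.min_const (l n))
    rw [one_mul] at h2
    exact h2
  obtain ⟨F, φ, hF, hφ, hlim⟩ := exists_subseq_tendsto_lipschitz hK hL
    (fun n t => f n (min t (l n))) hmin
    (fun n t ht => hfK n _ ⟨le_min ht.1 (hl0 n), min_le_right _ _⟩)
  obtain ⟨l', hl', ψ, hψ, hlψ⟩ := (isCompact_Icc (a := (0 : ℝ)) (b := L)).tendsto_subseq
    (x := fun n => l (φ n)) fun n => ⟨hl0 _, hlL _⟩
  set θ : ℕ → ℕ := fun n => φ (ψ n) with hθ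
  have hlim' : ∀ t ∈ Icc 0 L, Tendsto (fun n => f (θ n) (min t (l (θ n)))) atTop (𝓝 (F t)) :=
    fun t ht => (hlim t ht).comp hψ.tendsto_atTop
  have hlθ : Tendsto (fun n => l (θ n)) atTop (𝓝 l') := hlψ
  have hθt : Tendsto θ atTop atTop := hφ.tendsto_atTop.comp hψ.tendsto_atTop
  have hF0 : F 0 = x := by
    refine tendsto_nhds_unique (hlim' 0 ⟨le_rfl, hL⟩) ?_
    simp only [min_eq_left (hl0 _), hf0]
    exact hyx.comp hθt
  have hFl : F l' ∉ V := by
    have h2 : Tendsto (fun n => f (θ n) (l (θ n))) atTop (𝓝 (F l')) := by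
      refine (tendsto_iff_of_dist ?_).1 (hlim' l' hl')
      refine squeeze_zero (fun _ => dist_nonneg)
        (fun n => ((hmin (θ n)).dist_le_mul l' (l (θ n))).trans_eq' ?_)
        (g := fun n => ((1 : NNReal) : ℝ) * dist l' (l (θ n))) ?_
      · simp
      · have := (tendsto_const_nhds (x := l')).dist hlθ
        simpa using this
    exact hV.isClosed_compl.mem_of_tendsto h2 (Eventually.of_forall fun n => hfl _)
  have hmeas : Measurable ρ := hρ.measurable
  have hle := exitCost_le (ρ := ρ) hV hF hl'.1 hFl
  rw [hF0] at hle
  refine absurd (hc'.trans_le hle) (not_lt.2 ?_)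
  have hG : ∀ n, Measurable ((Icc 0 (l (θ n))).indicator fun t => ρ (f (θ n) t)) := fun n =>
    (hmeas.comp (hLip _).continuous.measurable).indicator measurableSet_Icc
  calc ∫⁻ t in Icc 0 l', ρ (F t) = ∫⁻ t in Ico 0 l', ρ (F t) :=
        setLIntegral_congr Ico_ae_eq_Icc.symm
    _ ≤ ∫⁻ t in Ico 0 l', liminf (fun n =>
          (Icc 0 (l (θ n))).indicator (fun t => ρ (f (θ n) t)) t) atTop := by
        refine setLIntegral_mono' measurableSet_Ico fun t ht => ?_
        refine le_of_forall_lt fun a ha => ?_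
        obtain ⟨a', haa', ha'⟩ := exists_between ha
        refine haa'.trans_le (le_liminf_of_le (by isBoundedDefault) ?_)
        filter_upwards [(hlim' t ⟨ht.1, ht.2.le.trans hl'.2⟩).eventually (hρ _ _ ha'),
          hlθ.eventually (lt_mem_nhds ht.2)] with n hn hn'
        rw [min_eq_left hn'.le] at hn
        rw [indicator_of_mem (show t ∈ Icc 0 (l (θ n)) from ⟨ht.1, hn'.le⟩)]
        exact hn.le
    _ ≤ ∫⁻ t, liminf (fun n =>
          (Icc 0 (l (θ n))).indicator (fun t => ρ (f (θ n) t)) t) atTop :=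
        setLIntegral_le_lintegral _ _
    _ ≤ liminf (fun n => ∫⁻ t, (Icc 0 (l (θ n))).indicator (fun t => ρ (f (θ n) t)) t) atTop :=
        lintegral_liminf_le hG
    _ ≤ c' := by
        refine liminf_le_of_frequently_le' (Frequently.of_forall fun n => ?_)
        rw [lintegral_indicator measurableSet_Icc]
        exact (hfc _).le

/-! ### Sets of capacity zero -/

/-- A null set carries a density of small norm which is infinite on it and has infinite integral
along every curve starting in it. Take `ρ = ∑ (aₙ + gₙ)` with pairs `(aₙ, gₙ)` of summable norms as
in `QBFL.exists_of_cap_lt`: integrating `1 ≤ aₙ (f t) + ∫ gₙ` over `t ∈ [0, l]` bounds `l` by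
`(1 + l) ∫ (aₙ + gₙ)`, and summing over `n` gives `∞`. -/
theorem QBFL.exists_density_of_cap_eq_zero [BorelSpace P] (X : QBFL P μ) {E : Set P}
    (hE : X.cap E = 0) {δ : ℝ≥0∞} (hδ : δ ≠ 0) :
    ∃ ρ : P → ℝ≥0∞, Measurable ρ ∧ X.nrmE ρ < δ ∧ (∀ x ∈ E, ρ x = ⊤) ∧
      ∀ (f : ℝ → P) (l : ℝ), LipschitzWith 1 f → f 0 ∈ E → 0 < l →
        ∫⁻ t in Icc 0 l, ρ (f t) = ⊤ := by
  obtain ⟨d, hd, hdsum⟩ := ENNReal.exists_pos_tsum_mul_lt_of_countable hδ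
    (fun n : ℕ => X.cc ^ (n + 1) * (X.cc * 2)) fun n =>
      ENNReal.mul_ne_top (ENNReal.pow_ne_top X.cc_lt_top.ne)
        (ENNReal.mul_ne_top X.cc_lt_top.ne (by simp))
  have hex := fun n => X.exists_of_cap_lt (E := E) (δ := d n)
    (by rw [hE]; exact_mod_cast hd n)
  choose a g ham hgm ha hg ha1 hag using hex
  refine ⟨fun x => ∑' n, (a n x + g n x), Measurable.tsum fun n => (ham n).add (hgm n),
    lt_of_le_of_lt ((X.nrmE_tsum _).trans (ENNReal.tsum_le_tsum fun n => ?_)) hdsum,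
    fun x hx => ?_, fun f l hf hf0 hl => ?_⟩
  · rw [mul_assoc]
    gcongr
    refine (X.nrmE_add (a n) (g n)).trans ?_
    rw [mul_assoc]
    gcongr
    rw [two_mul]
    exact add_le_add (ha n).le (hg n).le
  · refine top_unique ?_
    calc (⊤ : ℝ≥0∞) = ∑' _ : ℕ, 1 := (ENNReal.tsum_const_eq_top_of_ne_zero one_ne_zero).symm
      _ ≤ _ := ENNReal.tsum_le_tsum fun n => (ha1 n x hx).trans le_self_add
  · have hfm : Measurable f := hf.continuous.measurable
    have hamf : ∀ n, Measurable fun t => a n (f t) := fun n => (ham n).comp hfm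
    have hgmf : ∀ n, Measurable fun t => g n (f t) := fun n => (hgm n).comp hfm
    have hpt : ∀ n, ENNReal.ofReal l ≤
        (1 + ENNReal.ofReal l) * ∫⁻ t in Icc 0 l, (a n (f t) + g n (f t)) := fun n => by
      have h1 : ∀ t ∈ Ioc 0 l, 1 ≤ a n (f t) + ∫⁻ s in Icc 0 l, g n (f s) := fun t ht =>
        (hag n ⟨t, ht.1, f, hf.lipschitzOnWith⟩ hf0).trans
          (add_le_add le_rfl (lintegral_mono_set (Icc_subset_Icc_right ht.2)))
      have h2 := setLIntegral_mono' (μ := volume) measurableSet_Ioc h1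
      rw [lintegral_add_left (hamf n)] at h2
      simp only [lintegral_const, Measure.restrict_apply_univ, Real.volume_Ioc, one_mul,
        sub_zero] at h2
      rw [lintegral_add_left (hamf n)]
      have h3 : ∫⁻ t in Ioc 0 l, a n (f t) ≤ ∫⁻ t in Icc 0 l, a n (f t) :=
        lintegral_mono_set Ioc_subset_Icc_self
      refine h2.trans ?_
      rw [add_mul, one_mul, mul_comm _ (ENNReal.ofReal l)]
      gcongr
      · exact h3.trans le_self_add
      · exact le_add_self
    have htop : (1 + ENNReal.ofReal l) * ∫⁻ t in Icc 0 l, ∑' n, (a n (f t) + g n (f t)) = ⊤ := by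
      rw [lintegral_tsum (f := fun n t => a n (f t) + g n (f t)) fun n =>
        ((hamf n).add (hgmf n)).aemeasurable, ← ENNReal.tsum_mul_left]
      refine top_unique ?_
      calc (⊤ : ℝ≥0∞) = ∑' _ : ℕ, ENNReal.ofReal l :=
            (ENNReal.tsum_const_eq_top_of_ne_zero (ENNReal.ofReal_pos.2 hl).ne').symm
        _ ≤ _ := ENNReal.tsum_le_tsum hpt
    by_contra hne
    exact ENNReal.mul_ne_top (by simp) hne htop

/-- The conclusion for the part of a null set in a compact region, with the
truncated cost of leaving `V = {1 < ρ} ∩ interior K` as capacity test function. -/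
theorem QBFL.exists_local [BorelSpace P] (X : QBFL P μ) (hVC : X.VCProp) {E K : Set P}
    (hK : IsCompact K) (hEK : E ⊆ interior K) (hE : X.cap E = 0) {δ : ℝ≥0∞} (hδ : δ ≠ 0) :
    ∃ (U : Set P) (u g : P → ℝ≥0∞), IsOpen U ∧ E ⊆ U ∧ Measurable u ∧ Measurable g ∧
      (∀ x, u x ≤ 1) ∧ (∀ x ∈ U, u x = 1) ∧ X.nrmE u < δ ∧ X.nrmE g < δ ∧
      ∀ γ : Curve P, u (γ.toFun 0) ≤ curveLint γ g + u (γ.toFun γ.len) := by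
  obtain ⟨ρ₀, hρ₀m, hρ₀δ, hρ₀E, hρ₀f⟩ := X.exists_density_of_cap_eq_zero hE hδ
  obtain ⟨ρ, hρ, hρ₀ρ, hρδ⟩ := X.exists_lsc_majorant hVC hρ₀m hρ₀δ
  set V : Set P := ρ ⁻¹' Ioi 1 ∩ interior K with hVdef
  have hV : IsOpen V := (hρ.isOpen_preimage 1).inter isOpen_interior
  have hEV : E ⊆ V := fun x hx =>
    ⟨lt_of_lt_of_le (by rw [hρ₀E x hx]; exact ENNReal.one_lt_top) (hρ₀ρ x), hEK hx⟩
  have hlsc := lowerSemicontinuous_exitCost hρ hV hK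
    (inter_subset_right.trans interior_subset) fun x hx => (le_of_lt hx.1 : 1 ≤ ρ x)
  have htop : ∀ x ∈ E, exitCost ρ V x = ⊤ := fun x hx => by
    simp only [exitCost, iInf_eq_top]
    rintro l f ⟨hl, hf, rfl, hfl, -⟩
    have hlpos : 0 < l := hl.lt_of_ne fun h => hfl (h ▸ hEV hx)
    exact top_unique ((hρ₀f f l hf hx hlpos).ge.trans (lintegral_mono fun t => hρ₀ρ _))
  refine ⟨exitCost ρ V ⁻¹' Ioi 1, fun x => min (exitCost ρ V x) 1, ρ, hlsc.isOpen_preimage 1,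
    fun x hx => ?_, hlsc.measurable.min measurable_const, hρ.measurable,
    fun x => min_le_right _ _, fun x hx => min_eq_right (le_of_lt hx),
    (X.nrmE_mono fun x => ?_).trans_lt hρδ, hρδ, fun γ => ?_⟩
  · rw [mem_preimage, htop x hx]; exact ENNReal.one_lt_top
  · by_cases hx : x ∈ V
    · exact (min_le_right _ _).trans (le_of_lt hx.1)
    · rw [exitCost_eq_zero hV hx]; simp
  · rw [← min_add_add_left]
    exact min_le_min (exitCost_le_add ρ hV γ) le_add_self

/-- Maximal separated sets are countable, as balls around their points are disjoint and of
positive measure. -/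
theorem secondCountable_of_ball_pos [BorelSpace P] [SigmaFinite μ]
    (hball : ∀ (x : P) (r : ℝ), 0 < r → 0 < μ (ball x r)) : SecondCountableTopology P := by
  refine Metric.secondCountable_of_almost_dense_set fun ε hε => ?_
  obtain ⟨S, hS⟩ := zorn_subset {S : Set P | S.Pairwise fun x y => ε < dist x y}
    fun c hc hchain => ⟨⋃₀ c, (pairwise_sUnion hchain.directedOn).2 hc,
      fun s hs => subset_sUnion_of_mem hs⟩
  have hsep : S.Pairwise fun x y => ε < dist x y := hS.prop
  refine ⟨S, ?_, fun x => ?_⟩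
  · have h := Measure.countable_meas_pos_of_disjoint_iUnion (μ := μ)
      (As := fun x : S => ball (x : P) (ε / 2)) (fun _ => measurableSet_ball)
      (fun x y hxy => ball_disjoint_ball (by
        have := hsep x.2 y.2 (fun h => hxy (Subtype.ext h))
        linarith))
    have huniv : {x : S | 0 < μ (ball (x : P) (ε / 2))} = univ :=
      eq_univ_of_forall fun x => hball _ _ (half_pos hε)
    rw [huniv, countable_univ_iff] at h
    exact h
  · by_contra! hx
    have hins : (insert x S).Pairwise fun x y => ε < dist x y :=
      hsep.insert fun y hy _ => ⟨hx y hy, by rw [dist_comm]; exact hx y hy⟩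
    have := hS.le_of_ge hins (subset_insert x S) (mem_insert x S)
    have := hx x this
    rw [dist_self] at this
    linarith

theorem abs_coe_sub_coe_le {p q c : ℝ≥0∞} (hp : p ≠ ⊤) (hq : q ≠ ⊤) (h1 : p ≤ c + q)
    (h2 : q ≤ c + p) : ((p : EReal) - (q : EReal)).abs ≤ c := by
  rcases eq_or_ne c ⊤ with rfl | hc
  · exact le_top
  lift p to NNReal using hp
  lift q to NNReal using hq
  lift c to NNReal using hc
  norm_cast at h1 h2
  change ((((p : ℝ) - (q : ℝ) : ℝ)) : EReal).abs ≤ _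
  rw [EReal.abs_def]
  refine ENNReal.ofReal_le_of_le_toReal ?_
  have h1' : (p : ℝ) ≤ c + q := by exact_mod_cast h1
  have h2' : (q : ℝ) ≤ c + p := by exact_mod_cast h2
  rw [ENNReal.coe_toReal, abs_le]
  constructor <;> linarith

/-- If `P` is locally compact and `X` has the Vitali–Carathéodory property,
then the Sobolev capacity is an outer capacity on sets of capacity zero. -/
theorem cap_outer_on_null
    {P : Type*} [MetricSpace P] [MeasurableSpace P] [BorelSpace P] [LocallyCompactSpace P]
    (μ : MeasureTheory.Measure P) [SigmaFinite μ]
    (hball : ∀ (x : P) (r : ℝ), 0 < r → 0 < μ (Metric.ball x r) ∧ μ (Metric.ball x r) < ⊤)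
    (X : QBFL P μ) (hVC : X.VCProp)
    (E : Set P) (hE : X.cap E = 0) :
    ∀ ε : ℝ≥0∞, 0 < ε → ∃ U : Set P, IsOpen U ∧ E ⊆ U ∧ X.cap U < ε := by
  intro ε hε
  have : SecondCountableTopology P := secondCountable_of_ball_pos (μ := μ)
    fun x r hr => (hball x r hr).1
  let K := CompactExhaustion.choice P
  have hmono : ∀ n, X.cap (E ∩ interior (K n)) = 0 := fun n =>
    le_antisymm (hE ▸ biInf_mono fun u hu => ⟨hu.1, fun x hx => hu.2 x hx.1⟩) bot_le
  obtain ⟨d, hd, hdsum⟩ := ENNReal.exists_pos_tsum_mul_lt_of_countable hε.ne'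
    (fun n : ℕ => X.cc ^ (n + 1) * 2) fun n =>
      ENNReal.mul_ne_top (ENNReal.pow_ne_top X.cc_lt_top.ne) (by simp)
  have hex := fun n => X.exists_local hVC (K.isCompact n) inter_subset_right (hmono n)
    (δ := d n) (by exact_mod_cast (hd n).ne')
  choose U u g hU hEU hum hgm hu1 huU hud hgd hug using hex
  have hug' : ∀ γ : Curve P, ⨆ n, u n (γ.toFun 0) ≤
      curveLint γ (fun x => ∑' n, g n x) + ⨆ n, u n (γ.toFun γ.len) := fun γ =>
    iSup_le fun n => (hug n γ).trans (add_le_add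
      (lintegral_mono fun t => ENNReal.le_tsum (f := fun n => g n (γ.toFun t)) n)
      (le_iSup (fun n => u n (γ.toFun γ.len)) n))
  have hle1 : ∀ x, ⨆ n, u n x ≤ 1 := fun x => iSup_le fun n => hu1 n x
  have hgrad : IsUpperGradient (fun x => ((⨆ n, u n x : ℝ≥0∞) : EReal))
      (fun x => ∑' n, g n x) := by
    refine ⟨Measurable.tsum hgm, fun γ => ?_⟩
    refine abs_coe_sub_coe_le ((hle1 _).trans_lt ENNReal.one_lt_top).ne
      ((hle1 _).trans_lt ENNReal.one_lt_top).ne (hug' γ) ?_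
    have h := hug' γ.rev
    rw [curveLint_rev] at h
    simpa [Curve.rev] using h
  have hnewt : X.newt (fun x => ((⨆ n, u n x : ℝ≥0∞) : EReal)) < ε := by
    refine lt_of_le_of_lt (add_le_add (b := ∑' n, X.cc ^ (n + 1) * d n)
      (d := ∑' n, X.cc ^ (n + 1) * d n) ?_ ((iInf₂_le _ hgrad).trans ?_)) ?_
    · refine (X.nrmE_mono (f := fun x => ⨆ n, u n x) (g := fun x => ∑' n, u n x)
        fun x => iSup_le fun n => ENNReal.le_tsum n).trans ((X.nrmE_tsum u).trans ?_)
      exact ENNReal.tsum_le_tsum fun n => by gcongr; exact (hud n).le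
    · refine (X.nrmE_tsum g).trans ?_
      exact ENNReal.tsum_le_tsum fun n => by gcongr; exact (hgd n).le
    · rw [← ENNReal.tsum_add]
      refine lt_of_le_of_lt (ENNReal.tsum_le_tsum fun n => le_of_eq ?_) hdsum
      ring
  refine ⟨⋃ n, U n, isOpen_iUnion hU, fun x hx => ?_, lt_of_le_of_lt (iInf₂_le _ ?_) hnewt⟩
  · obtain ⟨n, hn⟩ := K.exists_mem x
    exact mem_iUnion.2 ⟨n + 1, hEU _ ⟨hx, K.subset_interior_succ n hn⟩⟩
  · refine ⟨⟨(Measurable.iSup hum).coe_ereal_ennreal, hnewt.trans_le le_top⟩, fun x hx => ?_⟩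
    obtain ⟨n, hn⟩ := mem_iUnion.1 hx
    rw [← EReal.coe_ennreal_one, EReal.coe_ennreal_le_coe_ennreal_iff, ← huU n x hn]
    exact le_iSup (fun n => u n x) n

end
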